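/- Let T ∈ (0,1). If Z(T) = ∑_{p ∈ dom U} 2^{−|p|/T} is a left-computable real number and T is a right-computable real number, then T is T-compressible, i.e., limsup_{n→∞} H(T_n)/n ≤ T. -/

import Mathlib

open Filter

/-- A set of finite binary strings is prefix-free if no element of it is a
prefix of another (distinct) element of it. -/
def PrefixFree (S : Set (List Bool)) : Prop :=
  ∀ p ∈ S, ∀ q ∈ S, p <+: q → p = q

/-- A computer: a partial recursive function from finite binary strings to
finite binary strings whose domain is a prefix-free set. -/
structure Computer where
  f : List Bool →. List Bool
  partrec : Partrec f
  prefixFree : PrefixFree {p | (f p).Dom}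

/-- The domain of a computer. -/
def Computer.domain (C : Computer) : Set (List Bool) := {p | (C.f p).Dom}

/-- A computer `U` is optimal if every computer can be simulated on `U` with
only a constant increase in program length. -/
def IsOptimal (U : Computer) : Prop :=
  ∀ C : Computer, ∃ d : ℕ, ∀ p : List Bool, (C.f p).Dom →
    ∃ p' : List Bool, p'.length ≤ p.length + d ∧ ∀ s, s ∈ C.f p → s ∈ U.f p'

/-- Program-size complexity `H(s)`: the minimal length of a program `p`
with `U(p) = s`. -/
noncomputable def H (U : Computer) (s : List Bool) : ℕ :=
  sInf {n | ∃ p : List Bool, p.length = n ∧ s ∈ U.f p}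

/-- The `n`-th bit (`n ≥ 1`) of the base-two expansion of `x mod 1`
(the expansion chosen with infinitely many zeros). -/
noncomputable def binDigit (x : ℝ) (n : ℕ) : Bool :=
  decide (⌊Int.fract x * 2 ^ n⌋ % 2 = 1)

/-- The first `n` bits of the base-two expansion of `x mod 1` (with
infinitely many zeros). -/
noncomputable def bits (x : ℝ) (n : ℕ) : List Bool :=
  (List.range n).map fun i => binDigit x (i + 1)

/-- A real `x` is weakly Chaitin `D`-random (w.r.t. the computer `U`). -/
def WeaklyChaitinRandom (U : Computer) (D x : ℝ) : Prop :=
  ∃ c : ℝ, ∀ n : ℕ, 1 ≤ n → D * n - c ≤ (H U (bits x n) : ℝ)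

/-- A real `x` is Chaitin `D`-random (w.r.t. the computer `U`). -/
def ChaitinRandom (U : Computer) (D x : ℝ) : Prop :=
  Tendsto (fun n : ℕ => (H U (bits x n) : ℝ) - D * n) atTop atTop

/-- A real `x` is `D`-compressible (w.r.t. the computer `U`). -/
def DCompressible (U : Computer) (D x : ℝ) : Prop :=
  Filter.limsup (fun n : ℕ => (H U (bits x n) : ℝ) / n) atTop ≤ D

/-- A computable real number. -/
def ComputableReal (T : ℝ) : Prop :=
  ∃ f : ℕ → ℚ, Computable f ∧ ∀ n : ℕ, 1 ≤ n → |T - (f n : ℝ)| < 1 / n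

/-- A right-computable real number. -/
def RightComputable (T : ℝ) : Prop :=
  ∃ g : ℕ → ℚ, Computable g ∧ (∀ n, T ≤ (g n : ℝ)) ∧
    Tendsto (fun n => ((g n : ℚ) : ℝ)) atTop (nhds T)

/-- A left-computable real number. -/
def LeftComputable (T : ℝ) : Prop := RightComputable (-T)

/-- The term `2 ^ (-|p| / T)` of the partition function `Z(T)`. -/
noncomputable def zterm (U : Computer) (T : ℝ) (p : U.domain) : ℝ :=
  (2 : ℝ) ^ (-((p : List Bool).length : ℝ) / T)

/-- The term `|p| ^ Q * 2 ^ (-|p| / T)` of `W(Q,T)`. -/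
noncomputable def wterm (U : Computer) (Q T : ℝ) (p : U.domain) : ℝ :=
  ((p : List Bool).length : ℝ) ^ Q * (2 : ℝ) ^ (-((p : List Bool).length : ℝ) / T)

/-- The term `|p| * 2 ^ (-|p| / T)` of `W(1,T)`. -/
noncomputable def wlterm (U : Computer) (T : ℝ) (p : U.domain) : ℝ :=
  ((p : List Bool).length : ℝ) * (2 : ℝ) ^ (-((p : List Bool).length : ℝ) / T)

/-- The term `|p| ^ 2 * 2 ^ (-|p| / T)` of `W(2,T)`. -/
noncomputable def wsqterm (U : Computer) (T : ℝ) (p : U.domain) : ℝ :=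
  ((p : List Bool).length : ℝ) ^ 2 * (2 : ℝ) ^ (-((p : List Bool).length : ℝ) / T)

/-- A lower-computable function `f : ℕ⁺ → [0,∞)` (represented on `ℕ`,
with all conditions imposed on positive arguments). -/
def LowerComputableFun (f : ℕ → ℝ) : Prop :=
  ∃ a : ℕ → ℕ → ℚ, Computable₂ a ∧
    (∀ k n : ℕ, 1 ≤ k → 1 ≤ n → (a k n : ℝ) ≤ f n) ∧
    (∀ n : ℕ, 1 ≤ n → Tendsto (fun k => ((a k n : ℚ) : ℝ)) atTop (nhds (f n)))

/-- A lower-computable semi-measure on finite binary strings. -/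
def LowerComputableSemiMeasure (r : List Bool → ℝ) : Prop :=
  (∀ s, 0 ≤ r s) ∧ (∀ s, r s ≤ 1) ∧ Summable r ∧ (∑' s, r s) ≤ 1 ∧
    ∃ f : ℕ → List Bool → ℚ, Computable₂ f ∧
      (∀ n s, ((f n s : ℚ) : ℝ) ≤ r s) ∧
      (∀ s, Tendsto (fun n => ((f n s : ℚ) : ℝ)) atTop (nhds (r s)))

/-- A universal probability. -/
def UniversalProbability (m : List Bool → ℝ) : Prop :=
  LowerComputableSemiMeasure m ∧
    ∀ r : List Bool → ℝ, LowerComputableSemiMeasure r →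
      ∃ c : ℝ, 0 < c ∧ ∀ s, c * r s ≤ m s

def E0 (q : ℚ) : ℕ := @Encodable.encode ℚ Rat.instEncodable q

theorem E0_eq (q : ℚ) : E0 q = Nat.pair (Encodable.encode q.num) q.den := rfl

theorem encode_int_ofNat (n : ℕ) : Encodable.encode (Int.ofNat n) = 2 * n := rfl
theorem encode_int_negSucc (n : ℕ) : Encodable.encode (Int.negSucc n) = 2 * n + 1 := rfl

theorem encode_int_natAbs (z : ℤ) : (Encodable.encode z + 1) / 2 = z.natAbs := by
  rcases z with n | n
  · rw [encode_int_ofNat]; simp; omega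
  · rw [encode_int_negSucc]; simp; omega

theorem encode_int_toNat (z : ℤ) :
    (if Encodable.encode z % 2 = 0 then Encodable.encode z / 2 else 0) = z.toNat := by
  rcases z with n | n
  · rw [encode_int_ofNat]; simp
  · rw [encode_int_negSucc, if_neg (by omega)]; simp

theorem encode_int_neg_toNat (z : ℤ) :
    (if Encodable.encode z % 2 = 0 then 0 else (Encodable.encode z + 1) / 2) = (-z).toNat := by
  rcases z with n | n
  · rw [encode_int_ofNat, if_pos (by omega)]; simp
  · rw [encode_int_negSucc, if_neg (by omega)]; simp; omega

/-- membership in the range of the rational encoding -/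
def SR (n : ℕ) : Prop :=
  0 < n.unpair.2 ∧ ∀ x < n.unpair.2 + 1, ¬ (((n.unpair.1 + 1) / 2) % x = 0 ∧ n.unpair.2 % x = 0 ∧ 1 < x)

theorem SR_iff (n : ℕ) : SR n ↔ ∃ q : ℚ, E0 q = n := by
  unfold SR
  constructor
  · rintro ⟨h1, h2⟩
    have hsurj : ∃ z : ℤ, Encodable.encode z = n.unpair.1 := by
      exact ⟨Denumerable.ofNat ℤ _, Denumerable.encode_ofNat _⟩
    obtain ⟨z, hz⟩ := hsurj
    have hc : z.natAbs.Coprime n.unpair.2 := by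
      rw [← encode_int_natAbs, hz]
      by_contra hne
      have hg : Nat.gcd ((n.unpair.1 + 1) / 2) n.unpair.2 ≠ 1 := hne
      have hpos : 0 < Nat.gcd ((n.unpair.1 + 1) / 2) n.unpair.2 := Nat.gcd_pos_of_pos_right _ h1
      refine h2 (Nat.gcd ((n.unpair.1 + 1) / 2) n.unpair.2)
        (Nat.lt_succ_of_le (Nat.gcd_le_right _ h1)) ⟨?_, ?_, by omega⟩
      · exact Nat.mod_eq_zero_of_dvd (Nat.gcd_dvd_left _ _)
      · exact Nat.mod_eq_zero_of_dvd (Nat.gcd_dvd_right _ _)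
    refine ⟨⟨z, n.unpair.2, h1.ne', hc⟩, ?_⟩
    rw [E0_eq]
    simp only [hz, Nat.pair_unpair]
  · rintro ⟨q, rfl⟩
    rw [E0_eq, Nat.unpair_pair]
    refine ⟨q.den_pos, ?_⟩
    rintro x - ⟨h1, h2, h3⟩
    simp only [encode_int_natAbs] at h1
    have := Nat.dvd_gcd (Nat.dvd_of_mod_eq_zero h1) (Nat.dvd_of_mod_eq_zero h2)
    rw [Nat.Coprime.gcd_eq_one q.reduced] at this
    have := Nat.le_of_dvd one_pos this
    omega

theorem nat_pow_primrec : Primrec₂ ((· ^ ·) : ℕ → ℕ → ℕ) := Primrec₂.unpaired'.1 Nat.Primrec.pow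

theorem SR_primrec : PrimrecPred SR := by
  have hR : PrimrecRel (fun (x : ℕ) (n : ℕ) =>
      ¬ (((n.unpair.1 + 1) / 2) % x = 0 ∧ n.unpair.2 % x = 0 ∧ 1 < x)) := by
    have h1 : Primrec fun p : ℕ × ℕ => p.2.unpair.1 := Primrec.fst.comp (Primrec.unpair.comp Primrec.snd)
    have h2 : Primrec fun p : ℕ × ℕ => p.2.unpair.2 := Primrec.snd.comp (Primrec.unpair.comp Primrec.snd)
    have h3 : PrimrecPred fun p : ℕ × ℕ =>
      ¬ (((p.2.unpair.1 + 1) / 2) % p.1 = 0 ∧ p.2.unpair.2 % p.1 = 0 ∧ 1 < p.1) := by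
      refine PrimrecPred.not (PrimrecPred.and ?_ (PrimrecPred.and ?_ ?_))
      · exact Primrec.eq.comp (Primrec.nat_mod.comp (Primrec.nat_div.comp
          (Primrec.succ.comp h1) (Primrec.const 2)) Primrec.fst) (Primrec.const 0)
      · exact Primrec.eq.comp (Primrec.nat_mod.comp h2 Primrec.fst) (Primrec.const 0)
      · exact Primrec.nat_lt.comp (Primrec.const 1) Primrec.fst
    exact h3.primrecRel
  have h2 : Primrec fun n : ℕ => n.unpair.2 := Primrec.snd.comp Primrec.unpair
  have h := PrimrecRel.comp hR.forall_lt (Primrec.succ.comp h2) Primrec.id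
  exact (Primrec.nat_lt.comp (Primrec.const 0) h2).and h

def E1 (q : ℚ) : ℕ := @Encodable.encode ℚ (Primcodable.toEncodable) q

theorem E0_computable : Computable E0 := by
  classical
  have hcount : Primrec fun n : ℕ => ((List.range n).filter (fun m => decide (SR m))).length :=
    Primrec.list_length.comp ((Primrec.listFilter SR_primrec).comp Primrec.list_range)
  have henc : ∀ q : ℚ, E1 q =
      ((List.range (E0 q)).filter (fun m => decide (SR m))).length := by
    intro q
    rw [← List.countP_eq_length_filter]
    have : @Encodable.encode ℚ (Primcodable.toEncodable) q = ((List.range (E0 q)).countP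
      (fun n => @decide (n ∈ Set.range E0) (@Encodable.decidableRangeEncode ℚ Rat.instEncodable n))) := rfl
    refine this.trans ?_
    apply List.countP_congr
    intro n _
    simp [SR_iff]
  have hp : PrimrecPred fun x : ℚ × ℕ => SR x.2 ∧
      ((List.range x.2).filter (fun m => decide (SR m))).length = E1 x.1 := by
    refine PrimrecPred.and (SR_primrec.comp Primrec.snd) ?_
    exact Primrec.eq.comp (hcount.comp Primrec.snd) (Primrec.encode.comp Primrec.fst)
  have hp' : Primrec₂ fun (q : ℚ) (n : ℕ) => decide (SR n ∧
      ((List.range n).filter (fun m => decide (SR m))).length = E1 q) := by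
    have := (primrecPred_iff_primrec_decide).1 hp
    exact this
  have hr := Partrec.rfind (hp'.to_comp.partrec₂)
  refine Partrec.of_eq hr ?_
  intro q
  have hm : E0 q ∈ Nat.rfind (fun n => (Part.some (decide (SR n ∧
      ((List.range n).filter (fun m => decide (SR m))).length = E1 q)) : Part Bool)) := by
    refine Nat.mem_rfind.2 ⟨?_, ?_⟩
    · simp [henc, (SR_iff _).2 ⟨q, rfl⟩]
    · intro m hm
      simp only [Part.mem_some_iff]
      symm
      rw [decide_eq_false_iff_not]
      rintro ⟨h1, h2⟩
      obtain ⟨q', rfl⟩ := (SR_iff _).1 h1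
      rw [← henc] at h2
      have := @Encodable.encode_injective ℚ Primcodable.toEncodable _ _ h2
      subst this
      exact lt_irrefl _ hm
  exact Part.eq_some_iff.2 hm

theorem rat_num_toNat_computable : Computable fun q : ℚ => q.num.toNat := by
  have h : Primrec fun n : ℕ => if n.unpair.1 % 2 = 0 then n.unpair.1 / 2 else 0 := by
    have h1 : Primrec fun p : ℕ => p.unpair.1 := Primrec.fst.comp (Primrec.unpair)
    exact Primrec.ite (Primrec.eq.comp (Primrec.nat_mod.comp h1 (Primrec.const 2)) (Primrec.const 0))
      (Primrec.nat_div.comp h1 (Primrec.const 2)) (Primrec.const 0)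
  refine (h.to_comp.comp E0_computable).of_eq ?_
  intro q
  rw [← encode_int_toNat, E0_eq, Nat.unpair_pair]

theorem rat_neg_num_toNat_computable : Computable fun q : ℚ => (-q.num).toNat := by
  have h : Primrec fun n : ℕ => if n.unpair.1 % 2 = 0 then 0 else (n.unpair.1 + 1) / 2 := by
    have h1 : Primrec fun p : ℕ => p.unpair.1 := Primrec.fst.comp (Primrec.unpair)
    exact Primrec.ite (Primrec.eq.comp (Primrec.nat_mod.comp h1 (Primrec.const 2)) (Primrec.const 0))
      (Primrec.const 0) (Primrec.nat_div.comp (Primrec.succ.comp h1) (Primrec.const 2))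
  refine (h.to_comp.comp E0_computable).of_eq ?_
  intro q
  rw [← encode_int_neg_toNat, E0_eq, Nat.unpair_pair]

theorem rat_den_computable : Computable fun q : ℚ => q.den := by
  have h : Primrec fun n : ℕ => n.unpair.2 := Primrec.snd.comp (Primrec.unpair)
  refine (h.to_comp.comp E0_computable).of_eq ?_
  intro q
  rw [E0_eq, Nat.unpair_pair]

theorem exists_computer (chk : List Bool → ℕ → Bool) (out : List Bool → ℕ → List Bool)
    (hc : Computable₂ chk) (ho : Computable₂ out) (a : ℕ)
    (hv : ∀ p w, chk p w = true → p.idxOf false + 1 + a * p.idxOf false = p.length) :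
    ∃ C : Computer, ∀ p, (∃ w, chk p w = true) → ∃ w, chk p w = true ∧
      (∀ m, m < w → chk p m = false) ∧ out p w ∈ C.f p := by
  have h1 := Partrec.rfind (hc.partrec₂)
  have h2 : Partrec fun p : List Bool => (Nat.rfind (chk p : ℕ →. Bool)).map (out p) :=
    Partrec.map h1 ho
  refine ⟨⟨_, h2, ?_⟩, ?_⟩
  · have key : ∀ p : List Bool, ((Nat.rfind (chk p : ℕ →. Bool)).map (out p)).Dom →
        p.idxOf false + 1 + a * p.idxOf false = p.length := by
      intro p hp
      obtain ⟨n, hn, -⟩ := Nat.rfind_dom.1 hp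
      exact hv p n (by simpa using hn)
    intro p hp q hq hpq
    have e1 := key p hp
    have e2 := key q hq
    obtain ⟨t, rfl⟩ := hpq
    have hmem : false ∈ p := List.idxOf_lt_length_iff.1 (by omega)
    rw [List.idxOf_append_of_mem hmem, e1] at e2
    have : t = [] := by
      apply List.eq_nil_of_length_eq_zero
      simpa using e2
    simp [this]
  · rintro p ⟨w, hw⟩
    obtain ⟨n, hn, -⟩ := Nat.rfind_min' (p := chk p) hw
    refine ⟨n, ?_, ?_, ?_⟩
    · have := Nat.rfind_spec hn
      simpa using this
    · intro m hm
      have := Nat.rfind_min hn hm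
      simpa using this
    · exact Part.mem_map _ hn

theorem domain_infinite (U : Computer) (hU : IsOptimal U) : U.domain.Infinite := by
  obtain ⟨C, hC⟩ := exists_computer
    (fun p _ => decide (p.idxOf false + 1 + 0 * p.idxOf false = p.length)) (fun p _ => p)
    (by
      have h : PrimrecPred fun p : List Bool × ℕ =>
          p.1.idxOf false + 1 + 0 * p.1.idxOf false = p.1.length := by
        have h1 : Primrec fun p : List Bool × ℕ => p.1.idxOf false :=
          Primrec.list_idxOf.comp (Primrec.const false) Primrec.fst
        exact Primrec.eq.comp (Primrec.nat_add.comp (Primrec.succ.comp h1)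
          (Primrec.nat_mul.comp (Primrec.const 0) h1)) (Primrec.list_length.comp Primrec.fst)
      exact (primrecPred_iff_primrec_decide.1 h).to_comp)
    (Computable.fst) 0 (by intro p w h; simpa using h)
  obtain ⟨d, hd⟩ := hU C
  have hs : ∀ n : ℕ, ∃ p ∈ U.domain, (List.replicate n true ++ [false]) ∈ U.f p := by
    intro n
    obtain ⟨w, -, -, hw⟩ := hC (List.replicate n true ++ [false]) ⟨0, by
      have hnm : false ∉ List.replicate n true := by simp
      simp [List.idxOf_append_of_notMem hnm]⟩
    obtain ⟨p', -, hp'⟩ := hd _ (Part.dom_iff_mem.2 ⟨_, hw⟩)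
    exact ⟨p', Part.dom_iff_mem.2 ⟨_, hp' _ hw⟩, hp' _ hw⟩
  choose f hf1 hf2 using hs
  refine Set.infinite_of_injective_forall_mem (f := f) ?_ hf1
  intro n m hnm
  have h2 := hf2 m
  rw [← hnm] at h2
  have := congrArg List.length (Part.mem_unique (hf2 n) h2)
  simpa using this

theorem primrec_sum {α : Type*} [Primcodable α] {f : α → ℕ → ℕ} {g : α → ℕ}
    (hf : Primrec₂ f) (hg : Primrec g) :
    Primrec fun a => ∑ n ∈ Finset.range (g a), f a n := by
  have h : Primrec₂ fun (a : α) (p : ℕ × ℕ) => p.2 + f a p.1 :=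
    Primrec.nat_add.comp₂ (Primrec.snd.comp Primrec.snd).to₂
      (hf.comp Primrec.fst (Primrec.fst.comp Primrec.snd)).to₂
  refine (Primrec.nat_rec' hg (Primrec.const 0) h).of_eq ?_
  intro a
  induction g a with
  | zero => simp
  | succ n ih => simp [Finset.sum_range_succ, ih]

def decL (n : ℕ) : List Bool := (Encodable.decode n).getD []

theorem decL_primrec : Primrec decL :=
  Primrec.option_getD.comp Primrec.decode (Primrec.const [])

theorem decL_encode (p : List Bool) : decL (Encodable.encode p) = p := by simp [decL]

def act (c : Nat.Partrec.Code) (k n : ℕ) : Prop :=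
  Encodable.encode (decL n) = n ∧ (Nat.Partrec.Code.evaln k c n).isSome = true ∧ (decL n).length ≤ k

instance (c : Nat.Partrec.Code) (k n : ℕ) : Decidable (act c k n) := by unfold act; infer_instance

def PP (c : Nat.Partrec.Code) (k x y : ℕ) : ℕ :=
  ∑ n ∈ Finset.range k, if act c k n then x ^ (decL n).length * y ^ (k - (decL n).length) else 0

theorem PP_primrec (c : Nat.Partrec.Code) : Primrec fun t : ℕ × ℕ × ℕ => PP c t.1 t.2.1 t.2.2 := by
  unfold PP
  refine primrec_sum (α := ℕ × ℕ × ℕ) (g := fun t => t.1)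
    (f := fun t n => if act c t.1 n then t.2.1 ^ (decL n).length * t.2.2 ^ (t.1 - (decL n).length) else 0)
    ?_ Primrec.fst
  have hk : Primrec fun t : (ℕ × ℕ × ℕ) × ℕ => t.1.1 := Primrec.fst.comp Primrec.fst
  have hx : Primrec fun t : (ℕ × ℕ × ℕ) × ℕ => t.1.2.1 :=
    Primrec.fst.comp (Primrec.snd.comp Primrec.fst)
  have hy : Primrec fun t : (ℕ × ℕ × ℕ) × ℕ => t.1.2.2 :=
    Primrec.snd.comp (Primrec.snd.comp Primrec.fst)
  have hd : Primrec fun t : (ℕ × ℕ × ℕ) × ℕ => decL t.2 := decL_primrec.comp Primrec.snd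
  have hl : Primrec fun t : (ℕ × ℕ × ℕ) × ℕ => (decL t.2).length := Primrec.list_length.comp hd
  have hact : PrimrecPred fun t : (ℕ × ℕ × ℕ) × ℕ => act c t.1.1 t.2 := by
    unfold act
    refine PrimrecPred.and ?_ (PrimrecPred.and ?_ ?_)
    · exact Primrec.eq.comp (Primrec.encode.comp hd) Primrec.snd
    · refine Primrec.eq.comp (Primrec.option_isSome.comp
        (Nat.Partrec.Code.primrec_evaln.comp ((hk.pair (Primrec.const c)).pair Primrec.snd))) (Primrec.const true)
    · exact Primrec.nat_le.comp hl hk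
  exact Primrec.ite hact (Primrec.nat_mul.comp (nat_pow_primrec.comp hx hl)
    (nat_pow_primrec.comp hy (Primrec.nat_sub.comp hk hl))) (Primrec.const 0)

theorem stage_exists (U : Computer) : ∃ (P : ℕ → ℕ → ℕ → ℕ) (G : ℕ → Finset (List Bool)),
    Primrec (fun t : ℕ × ℕ × ℕ => P t.1 t.2.1 t.2.2) ∧ Monotone G ∧
    (∀ k, ∀ p ∈ G k, p ∈ U.domain) ∧ (∀ p ∈ U.domain, ∃ k, p ∈ G k) ∧
    ∀ k x y, 0 < y → (P k x y : ℝ) = (y : ℝ) ^ k * ∑ p ∈ G k, ((x : ℝ) / y) ^ p.length := by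
  classical
  obtain ⟨c, hc⟩ := Nat.Partrec.Code.exists_code.1 U.partrec
  have hev : ∀ p : List Bool, (c.eval (Encodable.encode p)) = (U.f p).map Encodable.encode := by
    intro p
    rw [hc]; simp
  refine ⟨PP c, fun k => ((Finset.range k).filter (fun n => act c k n)).image decL, PP_primrec c,
    ?_, ?_, ?_, ?_⟩
  · intro k k' hk p hp
    simp only [Finset.mem_image, Finset.mem_filter, Finset.mem_range] at hp ⊢
    obtain ⟨n, ⟨h1, h2, h3, h4⟩, rfl⟩ := hp
    refine ⟨n, ⟨by omega, h2, ?_, by omega⟩, rfl⟩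
    obtain ⟨v, hv⟩ := Option.isSome_iff_exists.1 h3
    exact Option.isSome_iff_exists.2 ⟨v, Nat.Partrec.Code.evaln_mono hk hv⟩
  · intro k p hp
    simp only [Finset.mem_image, Finset.mem_filter, Finset.mem_range] at hp
    obtain ⟨n, ⟨h1, h2, h3, h4⟩, rfl⟩ := hp
    obtain ⟨v, hv⟩ := Option.isSome_iff_exists.1 h3
    have := Nat.Partrec.Code.evaln_sound hv
    rw [← h2, hev] at this
    obtain ⟨s, hs, -⟩ := (Part.mem_map_iff _).1 this
    exact Part.dom_iff_mem.2 ⟨s, hs⟩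
  · intro p hp
    obtain ⟨s, hs⟩ := Part.dom_iff_mem.1 hp
    have h1 : Encodable.encode s ∈ c.eval (Encodable.encode p) := by
      rw [hev]; exact Part.mem_map _ hs
    obtain ⟨k, hk⟩ := Nat.Partrec.Code.evaln_complete.1 h1
    refine ⟨max k p.length, ?_⟩
    simp only [Finset.mem_image, Finset.mem_filter, Finset.mem_range]
    have hk' := Nat.Partrec.Code.evaln_mono (le_max_left k p.length) hk
    refine ⟨Encodable.encode p, ⟨Nat.Partrec.Code.evaln_bound hk', by rw [decL_encode],
      Option.isSome_iff_exists.2 ⟨_, hk'⟩, by rw [decL_encode]; exact le_max_right _ _⟩, decL_encode p⟩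
  · intro k x y hy
    rw [Finset.sum_image, PP, Finset.sum_filter, Finset.mul_sum, Nat.cast_sum]
    · refine Finset.sum_congr rfl ?_
      intro n _
      split_ifs with h
      · have h3 : (decL n).length ≤ k := h.2.2
        have hy' : (y : ℝ) ≠ 0 := by positivity
        push_cast
        rw [div_pow]
        field_simp
        rw [mul_assoc, ← pow_add, Nat.sub_add_cancel h3]
      · simp
    · intro n hn m hm h
      have h1 := (Finset.mem_filter.1 hn).2.1
      have h2 := (Finset.mem_filter.1 hm).2.1
      rw [← h1, ← h2, h]
theorem kraft (S : Finset (List Bool)) (hS : PrefixFree (S : Set (List Bool))) (h0 : [] ∉ S) :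
    ∑ p ∈ S, ((1 : ℝ) / 2) ^ p.length ≤ 1 := by
  have hu : InformationTheory.UniquelyDecodable (S : Set (List Bool)) := by
    intro L1
    induction L1 with
    | nil =>
      intro L2 _ h2 h
      rcases L2 with _ | ⟨a, t⟩
      · rfl
      · exfalso
        simp only [List.flatten_nil, List.flatten_cons] at h
        have : a = [] := (List.append_eq_nil_iff.1 h.symm).1
        exact h0 (this ▸ h2 a (by simp))
    | cons b s ih =>
      intro L2 h1 h2 h
      rcases L2 with _ | ⟨a, t⟩
      · exfalso
        simp only [List.flatten_nil, List.flatten_cons] at h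
        have : b = [] := (List.append_eq_nil_iff.1 h).1
        exact h0 (this ▸ h1 b (by simp))
      · simp only [List.flatten_cons] at h
        have hb := h1 b (by simp)
        have ha := h2 a (by simp)
        have hab : a = b := by
          rcases List.prefix_or_prefix_of_prefix (l₃ := b ++ s.flatten)
            (h ▸ List.prefix_append a t.flatten) (List.prefix_append b s.flatten) with h' | h'
          · exact hS a ha b hb h'
          · exact (hS b hb a ha h').symm
        subst hab
        have := ih t (fun w hw => h1 w (by simp [hw])) (fun w hw => h2 w (by simp [hw]))
          (List.append_cancel_left h)
        rw [this]
  have := InformationTheory.kraft_mcmillan_inequality hu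
  simpa using this

def valL (p : List Bool) : ℕ := p.foldr (fun b v => b.toNat + 2 * v) 0

theorem valL_primrec : Primrec valL := by
  unfold valL
  refine Primrec.list_foldr (h := fun _ (q : Bool × ℕ) => q.1.toNat + 2 * q.2) Primrec.id (Primrec.const 0) ?_
  exact Primrec.nat_add.comp₂
    (((Primrec.dom_bool Bool.toNat).comp (Primrec.fst.comp Primrec.snd)).to₂)
    ((Primrec.nat_mul.comp (Primrec.const 2) (Primrec.snd.comp Primrec.snd)).to₂)

theorem block_exists : ∀ L b : ℕ, b < 2 ^ L → ∃ l : List Bool, l.length = L ∧ valL l = b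
  | 0, b, h => ⟨[], rfl, by simp at h; simp [valL, h]⟩
  | L + 1, b, h => by
    obtain ⟨l, h1, h2⟩ := block_exists L (b / 2) (by rw [pow_succ] at h; omega)
    refine ⟨decide (b % 2 = 1) :: l, by simp [h1], ?_⟩
    have : valL (decide (b % 2 = 1) :: l) = (decide (b % 2 = 1)).toNat + 2 * valL l := rfl
    rw [this, h2]
    by_cases hb : b % 2 = 1
    · simp [hb]; omega
    · simp [hb]; omega

theorem valL_prog (l : List Bool) : ∀ j : ℕ,
    valL (List.replicate j true ++ false :: l) / 2 ^ (j + 1) = valL l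
  | 0 => by
    have : valL (false :: l) = 0 + 2 * valL l := rfl
    simp [this]
  | j + 1 => by
    have : valL (List.replicate (j + 1) true ++ false :: l) =
      1 + 2 * valL (List.replicate j true ++ false :: l) := rfl
    rw [this, pow_succ', ← Nat.div_div_eq_div_mul]
    have h2 : (1 + 2 * valL (List.replicate j true ++ false :: l)) / 2 =
      valL (List.replicate j true ++ false :: l) := by omega
    rw [h2, valL_prog l j]

theorem idx_prog (l : List Bool) (j : ℕ) :
    (List.replicate j true ++ false :: l).idxOf false = j := by
  have hnm : false ∉ List.replicate j true := by simp
  simp [List.idxOf_append_of_notMem hnm]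

/-- the arithmetical core of the search predicate -/
def QQ (P : ℕ → ℕ → ℕ → ℕ) (K0 a : ℕ) (p : List Bool) (k x y A B u v : ℕ) : Prop :=
  p.idxOf false + 1 + a * p.idxOf false = p.length ∧ K0 ≤ k ∧ 0 < y ∧
  (valL p / 2 ^ (p.idxOf false + 1)) * 2 ^ k < P k 1 2 * 2 ^ (a * p.idxOf false) ∧
  A ≤ B ∧ y ^ A ≤ x ^ A * 2 ^ B ∧ P k x y * v < u * y ^ k

def OO (M r e : ℕ) (p : List Bool) (A B : ℕ) : List Bool :=
  (List.range (M * p.idxOf false + r)).map fun s =>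
    decide (((2 ^ (M * p.idxOf false + r) * A / B - e) / 2 ^ (M * p.idxOf false + r - 1 - s)) % 2 = 1)

theorem QQ_primrec (P : ℕ → ℕ → ℕ → ℕ) (hP : Primrec (fun t : ℕ × ℕ × ℕ => P t.1 t.2.1 t.2.2))
    (K0 a : ℕ) : PrimrecPred fun t : List Bool × (ℕ × ℕ × ℕ) × (ℕ × ℕ) × (ℕ × ℕ) =>
      QQ P K0 a t.1 t.2.1.1 t.2.1.2.1 t.2.1.2.2 t.2.2.1.1 t.2.2.1.2 t.2.2.2.1 t.2.2.2.2 := by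
  have s1 : Primrec fun t : List Bool × (ℕ × ℕ × ℕ) × (ℕ × ℕ) × (ℕ × ℕ) => t.1 := Primrec.fst
  have s2 : Primrec fun t : List Bool × (ℕ × ℕ × ℕ) × (ℕ × ℕ) × (ℕ × ℕ) => t.2.1 :=
    Primrec.fst.comp Primrec.snd
  have s3 : Primrec fun t : List Bool × (ℕ × ℕ × ℕ) × (ℕ × ℕ) × (ℕ × ℕ) => t.2.2.1 :=
    Primrec.fst.comp (Primrec.snd.comp Primrec.snd)
  have s4 : Primrec fun t : List Bool × (ℕ × ℕ × ℕ) × (ℕ × ℕ) × (ℕ × ℕ) => t.2.2.2 :=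
    Primrec.snd.comp (Primrec.snd.comp Primrec.snd)
  have hk := Primrec.fst.comp s2
  have hx := Primrec.fst.comp (Primrec.snd.comp s2)
  have hy := Primrec.snd.comp (Primrec.snd.comp s2)
  have hA := Primrec.fst.comp s3
  have hB := Primrec.snd.comp s3
  have hu := Primrec.fst.comp s4
  have hv := Primrec.snd.comp s4
  have hi : Primrec fun t : List Bool × (ℕ × ℕ × ℕ) × (ℕ × ℕ) × (ℕ × ℕ) => t.1.idxOf false :=
    Primrec.list_idxOf.comp (Primrec.const false) s1
  have two : Primrec fun _ : List Bool × (ℕ × ℕ × ℕ) × (ℕ × ℕ) × (ℕ × ℕ) => 2 := Primrec.const 2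
  have hai := Primrec.nat_mul.comp (Primrec.const a) hi
  unfold QQ
  refine PrimrecPred.and ?_ (PrimrecPred.and ?_ (PrimrecPred.and ?_ (PrimrecPred.and ?_
    (PrimrecPred.and ?_ (PrimrecPred.and ?_ ?_)))))
  · exact Primrec.eq.comp (Primrec.nat_add.comp (Primrec.succ.comp hi) hai) (Primrec.list_length.comp s1)
  · exact Primrec.nat_le.comp (Primrec.const K0) hk
  · exact Primrec.nat_lt.comp (Primrec.const 0) hy
  · refine Primrec.nat_lt.comp (Primrec.nat_mul.comp (Primrec.nat_div.comp (valL_primrec.comp s1)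
      (nat_pow_primrec.comp two (Primrec.succ.comp hi))) (nat_pow_primrec.comp two hk)) ?_
    exact Primrec.nat_mul.comp (hP.comp (hk.pair ((Primrec.const 1).pair (Primrec.const 2))))
      (nat_pow_primrec.comp two hai)
  · exact Primrec.nat_le.comp hA hB
  · exact Primrec.nat_le.comp (nat_pow_primrec.comp hy hA)
      (Primrec.nat_mul.comp (nat_pow_primrec.comp hx hA) (nat_pow_primrec.comp two hB))
  · exact Primrec.nat_lt.comp (Primrec.nat_mul.comp (hP.comp s2) hv)
      (Primrec.nat_mul.comp hu (nat_pow_primrec.comp hy hk))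

theorem OO_primrec (M r e : ℕ) :
    Primrec fun t : List Bool × ℕ × ℕ => OO M r e t.1 t.2.1 t.2.2 := by
  have hn : Primrec fun t : List Bool × ℕ × ℕ => M * t.1.idxOf false + r :=
    Primrec.nat_add.comp (Primrec.nat_mul.comp (Primrec.const M)
      (Primrec.list_idxOf.comp (Primrec.const false) Primrec.fst)) (Primrec.const r)
  unfold OO
  refine Primrec.list_map (Primrec.list_range.comp hn) ?_
  have hn' := hn.comp (Primrec.fst (α := List Bool × ℕ × ℕ) (β := ℕ))
  have two : Primrec fun _ : (List Bool × ℕ × ℕ) × ℕ => 2 := Primrec.const 2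
  have hA : Primrec fun t : (List Bool × ℕ × ℕ) × ℕ => t.1.2.1 :=
    Primrec.fst.comp (Primrec.snd.comp Primrec.fst)
  have hB : Primrec fun t : (List Bool × ℕ × ℕ) × ℕ => t.1.2.2 :=
    Primrec.snd.comp (Primrec.snd.comp Primrec.fst)
  have : PrimrecPred fun t : (List Bool × ℕ × ℕ) × ℕ =>
    ((2 ^ (M * t.1.1.idxOf false + r) * t.1.2.1 / t.1.2.2 - e) /
      2 ^ (M * t.1.1.idxOf false + r - 1 - t.2)) % 2 = 1 := by
    refine Primrec.eq.comp (Primrec.nat_mod.comp (Primrec.nat_div.comp ?_ ?_) two) (Primrec.const 1)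
    · exact Primrec.nat_sub.comp (Primrec.nat_div.comp (Primrec.nat_mul.comp
        (nat_pow_primrec.comp two hn') hA) hB) (Primrec.const e)
    · exact nat_pow_primrec.comp two (Primrec.nat_sub.comp
        (Primrec.nat_sub.comp hn' (Primrec.const 1)) Primrec.snd)
  exact primrecPred_iff_primrec_decide.1 this

theorem machine (P : ℕ → ℕ → ℕ → ℕ) (hP : Primrec (fun t : ℕ × ℕ × ℕ => P t.1 t.2.1 t.2.2))
    (K0 a : ℕ) (ta tb zu zv : ℕ → ℕ) (hta : Computable ta) (htb : Computable tb)
    (hzu : Computable zu) (hzv : Computable zv) :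
    ∃ I : List Bool → ℕ,
      (∀ p, (∃ k i x y m, QQ P K0 a p k x y (ta i) (tb i) (zu m) (zv m)) →
        ∃ k x y m, QQ P K0 a p k x y (ta (I p)) (tb (I p)) (zu m) (zv m)) ∧
      ∀ M r e, ∃ C : Computer, ∀ p,
        (∃ k i x y m, QQ P K0 a p k x y (ta i) (tb i) (zu m) (zv m)) →
        OO M r e p (ta (I p)) (tb (I p)) ∈ C.f p := by
  classical
  obtain ⟨D, hD, hDs⟩ : ∃ D : ℕ → ℕ × ℕ × ℕ × ℕ × ℕ, Primrec D ∧ ∀ v, ∃ w, D w = v :=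
    ⟨fun w => Denumerable.ofNat (ℕ × ℕ × ℕ × ℕ × ℕ) w, Primrec.ofNat _,
      fun v => ⟨Encodable.encode v, Denumerable.ofNat_encode _⟩⟩
  obtain ⟨qb, hqb, hqs⟩ : ∃ qb : List Bool × (ℕ × ℕ × ℕ) × (ℕ × ℕ) × (ℕ × ℕ) → Bool, Computable qb ∧
      ∀ p k x y A B u v, qb (p, (k, x, y), (A, B), (u, v)) = true ↔ QQ P K0 a p k x y A B u v :=
    ⟨_, (primrecPred_iff_primrec_decide.1 (QQ_primrec P hP K0 a)).to_comp, by
      intro p k x y A B u v; exact decide_eq_true_iff⟩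
  have hD' : Primrec fun q : List Bool × ℕ => D q.2 := hD.comp Primrec.snd
  have d1 : Primrec fun q : List Bool × ℕ => (D q.2).1 := Primrec.fst.comp hD'
  have d2 : Primrec fun q : List Bool × ℕ => (D q.2).2.1 := Primrec.fst.comp (Primrec.snd.comp hD')
  have d3 : Primrec fun q : List Bool × ℕ => (D q.2).2.2.1 :=
    Primrec.fst.comp (Primrec.snd.comp (Primrec.snd.comp hD'))
  have d4 : Primrec fun q : List Bool × ℕ => (D q.2).2.2.2.1 :=
    Primrec.fst.comp (Primrec.snd.comp (Primrec.snd.comp (Primrec.snd.comp hD')))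
  have d5 : Primrec fun q : List Bool × ℕ => (D q.2).2.2.2.2 :=
    Primrec.snd.comp (Primrec.snd.comp (Primrec.snd.comp (Primrec.snd.comp hD')))
  have hc : Computable₂ fun (p : List Bool) (w : ℕ) => qb (p, ((D w).1, (D w).2.2.1, (D w).2.2.2.1),
        (ta (D w).2.1, tb (D w).2.1), (zu (D w).2.2.2.2, zv (D w).2.2.2.2)) := by
    have hg := (Computable.fst (α := List Bool) (β := ℕ)).pair (((d1.pair (d3.pair d4)).to_comp).pair
        (((hta.comp d2.to_comp).pair (htb.comp d2.to_comp)).pair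
          ((hzu.comp d5.to_comp).pair (hzv.comp d5.to_comp))))
    exact hqb.comp hg
  obtain ⟨chk, hchk⟩ : ∃ chk : List Bool → ℕ → Bool, chk = fun (p : List Bool) (w : ℕ) =>
      qb (p, ((D w).1, (D w).2.2.1, (D w).2.2.2.1),
        (ta (D w).2.1, tb (D w).2.1), (zu (D w).2.2.2.2, zv (D w).2.2.2.2)) := ⟨_, rfl⟩
  rw [← hchk] at hc
  have hex : ∀ p, (∃ k i x y m, QQ P K0 a p k x y (ta i) (tb i) (zu m) (zv m)) →
      ∃ w, chk p w = true := by
    rintro p ⟨k, i, x, y, m, h⟩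
    obtain ⟨w0, hw0⟩ := hDs (k, i, x, y, m)
    refine ⟨w0, ?_⟩
    rw [hchk]
    simp only [hw0]
    exact (hqs _ _ _ _ _ _ _ _).2 h
  have hsp : ∀ p w, chk p w = true → QQ P K0 a p (D w).1 (D w).2.2.1 (D w).2.2.2.1
      (ta (D w).2.1) (tb (D w).2.1) (zu (D w).2.2.2.2) (zv (D w).2.2.2.2) := by
    intro p w h
    rw [hchk] at h
    exact (hqs _ _ _ _ _ _ _ _).1 h
  refine ⟨fun p => if h : ∃ w, chk p w = true then (D (Nat.find h)).2.1 else 0, ?_, ?_⟩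
  · intro p hp
    have h := hex p hp
    simp only [dif_pos h]
    exact ⟨_, _, _, _, hsp p _ (Nat.find_spec h)⟩
  · intro M r e
    have ho : Computable₂ fun (p : List Bool) (w : ℕ) => OO M r e p (ta (D w).2.1) (tb (D w).2.1) :=
      (OO_primrec M r e).to_comp.comp (g := fun q : List Bool × ℕ => (q.1, ta (D q.2).2.1, tb (D q.2).2.1))
        (Computable.fst.pair ((hta.comp d2.to_comp).pair (htb.comp d2.to_comp)))
    obtain ⟨C, hC⟩ := exists_computer chk _ hc ho a (by
      intro p w h
      exact (hsp p w h).1)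
    refine ⟨C, ?_⟩
    intro p hp
    have h := hex p hp
    obtain ⟨w, h1, h2, h3⟩ := hC p h
    have hw : Nat.find h = w := by
      rw [Nat.find_eq_iff]
      exact ⟨h1, fun m hm => by simp [h2 m hm]⟩
    simp only [dif_pos h, hw]
    exact h3

theorem bits_eq (T : ℝ) (hT0 : 0 < T) (hT1 : T < 1) (n : ℕ) :
    bits T n = (List.range n).map fun s => decide ((⌊T * 2 ^ n⌋₊ / 2 ^ (n - 1 - s)) % 2 = 1) := by
  unfold bits
  apply List.map_congr_left
  intro s hs
  have hs' : s < n := List.mem_range.1 hs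
  unfold binDigit
  rw [Int.fract_eq_self.2 ⟨hT0.le, hT1⟩]
  have h1 : ⌊T * 2 ^ (s + 1)⌋ = ((⌊T * 2 ^ n⌋₊ / 2 ^ (n - 1 - s) : ℕ) : ℤ) := by
    have h2 : T * 2 ^ (s + 1) = T * 2 ^ n / ((2 ^ (n - 1 - s) : ℕ) : ℝ) := by
      have : n = (s + 1) + (n - 1 - s) := by omega
      rw [eq_div_iff (by positivity)]
      push_cast
      rw [mul_assoc, ← pow_add, ← this]
    rw [← Nat.floor_div_natCast, ← h2, Int.natCast_floor_eq_floor (by positivity)]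
  rw [h1]
  congr 1
  apply propext
  omega

theorem tail_bound (U : Computer) (G : ℕ → Finset (List Bool)) (hmono : Monotone G)
    (hdom : ∀ k, ∀ p ∈ G k, p ∈ U.domain) (hcov : ∀ p ∈ U.domain, ∃ k, p ∈ G k)
    (L k : ℕ) (ω x : ℝ) (hx0 : 0 < x) (hx1 : 2 * x ≤ 1)
    (h1 : ∀ k', ∑ p ∈ G k', ((1 : ℝ) / 2) ^ p.length ≤ ω + (1 / 2) ^ L)
    (h2 : ω ≤ ∑ p ∈ G k, ((1 : ℝ) / 2) ^ p.length) :
    ∑' p : U.domain, x ^ (p : List Bool).length ≤ ∑ p ∈ G k, x ^ p.length + x ^ L := by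
  classical
  apply tsum_le_of_sum_le'
  · positivity
  intro F
  have hF : ∃ k', k ≤ k' ∧ ∀ p ∈ F, (p : List Bool) ∈ G k' := by
    induction F using Finset.induction_on with
    | empty => exact ⟨k, le_rfl, by simp⟩
    | insert a s _ ih =>
      obtain ⟨k1, hk1, hs⟩ := ih
      obtain ⟨k2, hk2⟩ := hcov a a.2
      refine ⟨max k1 k2, le_max_of_le_left hk1, ?_⟩
      intro p hp
      rcases Finset.mem_insert.1 hp with rfl | hp
      · exact hmono (le_max_right _ _) hk2
      · exact hmono (le_max_left _ _) (hs p hp)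
  obtain ⟨k', hkk, hF⟩ := hF
  have e1 : ∑ p ∈ F, x ^ (p : List Bool).length ≤ ∑ p ∈ G k', x ^ p.length := by
    have hm : ∑ p ∈ F.map (Function.Embedding.subtype _), x ^ p.length =
      ∑ p ∈ F, x ^ (p : List Bool).length := Finset.sum_map _ _ _
    rw [← hm]
    refine Finset.sum_le_sum_of_subset_of_nonneg ?_ (fun _ _ _ => by positivity)
    intro p hp
    obtain ⟨q, hq, rfl⟩ := Finset.mem_map.1 hp
    exact hF q hq
  have hsub := hmono hkk
  have e2 : ∑ p ∈ G k' \ G k, ((1 : ℝ) / 2) ^ p.length ≤ (1 / 2) ^ L := by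
    have := Finset.sum_sdiff hsub (f := fun p : List Bool => ((1 : ℝ) / 2) ^ p.length)
    have := h1 k'
    linarith
  have e3 : ∑ p ∈ G k' \ G k, x ^ p.length ≤ x ^ L := by
    have : ∀ p ∈ G k' \ G k, x ^ p.length ≤ ((1 : ℝ) / 2) ^ p.length * (2 * x) ^ L := by
      intro p hp
      have h3 : ((1 : ℝ) / 2) ^ p.length ≤ (1 / 2) ^ L :=
        (Finset.single_le_sum (f := fun p : List Bool => ((1 : ℝ) / 2) ^ p.length)
          (fun _ _ => by positivity) hp).trans e2
      have h4 : L ≤ p.length := by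
        by_contra hlt
        push Not at hlt
        have := pow_lt_pow_right_of_lt_one₀ (a := (1 : ℝ) / 2) (by norm_num) (by norm_num) hlt
        linarith
      have h5 : x ^ p.length = ((1 : ℝ) / 2) ^ p.length * (2 * x) ^ p.length := by
        rw [← mul_pow]; congr 1; ring
      rw [h5]
      exact mul_le_mul_of_nonneg_left (pow_le_pow_of_le_one (by positivity) hx1 h4) (by positivity)
    calc _ ≤ ∑ p ∈ G k' \ G k, ((1 : ℝ) / 2) ^ p.length * (2 * x) ^ L := Finset.sum_le_sum this
      _ = (∑ p ∈ G k' \ G k, ((1 : ℝ) / 2) ^ p.length) * (2 * x) ^ L := by rw [Finset.sum_mul]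
      _ ≤ (1 / 2) ^ L * (2 * x) ^ L := mul_le_mul_of_nonneg_right e2 (by positivity)
      _ = x ^ L := by rw [← mul_pow]; congr 1; ring
  have := Finset.sum_sdiff hsub (f := fun p : List Bool => x ^ p.length)
  linarith

theorem nil_notMem (U : Computer) (hinf : U.domain.Infinite) : [] ∉ U.domain := by
  intro h
  apply hinf
  apply Set.Finite.subset (Set.finite_singleton [])
  intro p hp
  exact (U.prefixFree [] h p hp List.nil_prefix).symm

theorem kraft_dom (U : Computer) (hinf : U.domain.Infinite) (S : Finset (List Bool))
    (hS : ∀ p ∈ S, p ∈ U.domain) : ∑ p ∈ S, ((1 : ℝ) / 2) ^ p.length ≤ 1 := by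
  apply kraft
  · intro p hp q hq h
    exact U.prefixFree p (hS p hp) q (hS q hq) h
  · intro h
    exact nil_notMem U hinf (hS _ h)

theorem sum_lt_Z (U : Computer) (hinf : U.domain.Infinite) (S : Finset (List Bool))
    (hS : ∀ p ∈ S, p ∈ U.domain) (x : ℝ) (hx0 : 0 < x) (hx1 : 2 * x ≤ 1) :
    ∑ p ∈ S, x ^ p.length < ∑' p : U.domain, x ^ (p : List Bool).length := by
  classical
  have hsum : Summable fun p : U.domain => x ^ (p : List Bool).length := by
    apply summable_of_sum_le (c := 1) (fun _ => by positivity)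
    intro F
    have h1 : ∑ p ∈ F, x ^ (p : List Bool).length ≤ ∑ p ∈ F, ((1 : ℝ) / 2) ^ (p : List Bool).length :=
      Finset.sum_le_sum fun p _ => pow_le_pow_left₀ hx0.le (by linarith) _
    refine h1.trans ?_
    have hm : ∑ p ∈ F.map (Function.Embedding.subtype _), ((1 : ℝ) / 2) ^ p.length =
      ∑ p ∈ F, ((1 : ℝ) / 2) ^ (p : List Bool).length := Finset.sum_map _ _ _
    rw [← hm]
    apply kraft_dom U hinf
    intro p hp
    obtain ⟨q, hq, rfl⟩ := Finset.mem_map.1 hp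
    exact q.2
  obtain ⟨q, hq1, hq2⟩ := hinf.exists_notMem_finset S
  have h1 : ∑ p ∈ S.subtype (· ∈ U.domain), x ^ (p : List Bool).length = ∑ p ∈ S, x ^ p.length :=
    Finset.sum_subtype_of_mem (fun p : List Bool => x ^ p.length) hS
  rw [← h1]
  have hn : (⟨q, hq1⟩ : U.domain) ∉ S.subtype (· ∈ U.domain) := by simpa using hq2
  have h2 := hsum.sum_le_tsum (insert ⟨q, hq1⟩ (S.subtype (· ∈ U.domain))) (fun _ _ => by positivity)
  rw [Finset.sum_insert hn] at h2
  have h3 : 0 < x ^ q.length := by positivity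
  refine lt_of_lt_of_le ?_ h2
  simpa using h3

theorem t_bound (T t : ℝ) (hT0 : 0 < T) (htT : T ≤ t) (ht1 : t ≤ 1) :
    (t - T) * (Real.log 2 * (2 : ℝ) ^ (-1 / T)) ≤ (2 : ℝ) ^ (-1 / t) - (2 : ℝ) ^ (-1 / T) := by
  have ht0 : 0 < t := by linarith
  have h1 : (2 : ℝ) ^ (-1 / t) = (2 : ℝ) ^ (-1 / T) * (2 : ℝ) ^ (1 / T - 1 / t) := by
    rw [← Real.rpow_add (by norm_num)]; congr 1; ring
  have h2 : 1 + Real.log 2 * (1 / T - 1 / t) ≤ (2 : ℝ) ^ (1 / T - 1 / t) := by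
    rw [Real.rpow_def_of_pos (by norm_num)]
    have := Real.add_one_le_exp (Real.log 2 * (1 / T - 1 / t))
    linarith
  have h3 : t - T ≤ 1 / T - 1 / t := by
    rw [div_sub_div _ _ hT0.ne' ht0.ne', le_div_iff₀ (by positivity)]
    have : T * t ≤ 1 := by nlinarith
    nlinarith
  have hl : 0 < Real.log 2 := Real.log_pos (by norm_num)
  have hx : 0 < (2 : ℝ) ^ (-1 / T) := by positivity
  rw [h1]
  have h4 : Real.log 2 * (t - T) ≤ (2 : ℝ) ^ (1 / T - 1 / t) - 1 := by nlinarith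
  nlinarith

theorem pow_cond (A B x y : ℕ) (hA : 0 < A) (hB : 0 < B) (hy : 0 < y) :
    y ^ A ≤ x ^ A * 2 ^ B ↔ (2 : ℝ) ^ (-1 / ((A : ℝ) / B)) ≤ (x : ℝ) / y := by
  have hA' : (0 : ℝ) < A := by exact_mod_cast hA
  have hB' : (0 : ℝ) < B := by exact_mod_cast hB
  have hy' : (0 : ℝ) < y := by exact_mod_cast hy
  have h1 : ((2 : ℝ) ^ (-1 / ((A : ℝ) / B))) ^ A = 1 / 2 ^ B := by
    rw [← Real.rpow_natCast, ← Real.rpow_mul (by norm_num)]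
    have : -1 / ((A : ℝ) / B) * A = -(B : ℝ) := by field_simp
    rw [this, Real.rpow_neg (by norm_num), Real.rpow_natCast, one_div]
  rw [← pow_le_pow_iff_left₀ (a := (2 : ℝ) ^ (-1 / ((A : ℝ) / B))) (b := (x : ℝ) / y) (by positivity) (by positivity) hA.ne', h1, div_pow,
    div_le_div_iff₀ (by positivity) (by positivity), one_mul]
  exact_mod_cast Iff.rfl

theorem search_exists (G : Finset (List Bool)) (T Z : ℝ) (hT0 : 0 < T) (hT1 : T < 1)
    (hZ : ∑ p ∈ G, ((2 : ℝ) ^ (-1 / T)) ^ p.length < Z)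
    (ta tb zu zv : ℕ → ℕ) (htb : ∀ i, 0 < tb i) (htT : ∀ i, T ≤ (ta i : ℝ) / tb i)
    (hti : ∀ c, T < c → ∃ i, (ta i : ℝ) / tb i < c)
    (hzi : ∀ c, c < Z → ∃ m, c < (zu m : ℝ) / zv m) :
    ∃ i x y m : ℕ, 0 < y ∧ ta i ≤ tb i ∧ y ^ ta i ≤ x ^ ta i * 2 ^ tb i ∧
      ∑ p ∈ G, ((x : ℝ) / y) ^ p.length < (zu m : ℝ) / zv m := by
  have hcont : ContinuousAt (fun ξ : ℝ => ∑ p ∈ G, ξ ^ p.length) ((2 : ℝ) ^ (-1 / T)) := by fun_prop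
  have hev := hcont.eventually_lt continuousAt_const hZ
  obtain ⟨u, hu, hu2⟩ := (mem_nhdsGE_iff_exists_Ico_subset).1 (mem_nhdsWithin_of_mem_nhds hev)
  have hu : (2 : ℝ) ^ (-1 / T) < u := hu
  have hcont2 : ContinuousAt (fun t : ℝ => (2 : ℝ) ^ (-1 / t)) T := by
    have : ContinuousAt (fun t : ℝ => -1 / t) T := continuousAt_const.div continuousAt_id hT0.ne'
    exact ContinuousAt.comp (g := fun s : ℝ => (2 : ℝ) ^ s)
      (Real.continuousAt_const_rpow (by norm_num)) this
  have hev2 := (hcont2.eventually_lt continuousAt_const hu).and (Iio_mem_nhds hT1)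
  obtain ⟨c, hc, hc2⟩ := (mem_nhdsGE_iff_exists_Ico_subset).1 (mem_nhdsWithin_of_mem_nhds hev2)
  obtain ⟨i, hi⟩ := hti c hc
  obtain ⟨h1, h2⟩ := hc2 ⟨htT i, hi⟩
  have htb' : (0 : ℝ) < tb i := by exact_mod_cast htb i
  obtain ⟨q, hq1, hq2⟩ := exists_rat_btwn h1
  have hq0 : (0 : ℝ) < q := lt_trans (by positivity) hq1
  have hq0' : 0 < q := by exact_mod_cast hq0
  have hqe : ((q.num.toNat : ℕ) : ℝ) / q.den = q := by
    have h3 : ((q.num.toNat : ℕ) : ℤ) = q.num := Int.toNat_of_nonneg (Rat.num_pos.2 hq0').le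
    have h4 : ((q.num.toNat : ℕ) : ℝ) = ((q.num : ℤ) : ℝ) := by exact_mod_cast h3
    rw [h4]
    exact (Rat.cast_def q).symm
  have hlt : ∑ p ∈ G, (q : ℝ) ^ p.length < Z := by
    apply hu2
    refine ⟨?_, hq2⟩
    refine le_trans ?_ hq1.le
    apply Real.rpow_le_rpow_of_exponent_le (by norm_num)
    rw [div_le_div_iff₀ hT0 (lt_of_lt_of_le hT0 (htT i))]
    linarith [htT i]
  obtain ⟨m, hm⟩ := hzi _ hlt
  refine ⟨i, q.num.toNat, q.den, m, q.den_pos, ?_, ?_, ?_⟩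
  · have h2' : (ta i : ℝ) / tb i < 1 := h2
    rw [div_lt_one htb'] at h2'
    exact_mod_cast h2'.le
  · rw [pow_cond _ _ _ _ ?_ (htb i) q.den_pos, hqe]
    · exact hq1.le
    · rcases Nat.eq_zero_or_pos (ta i) with h | h
      · have := htT i
        rw [h] at this
        simp at this
        linarith
      · exact h
  · rw [hqe]; exact hm

theorem block_choice (Ω : ℕ → ℝ) (hm : Monotone Ω) (hle : ∀ k, Ω k ≤ 1) (K0 : ℕ) (hpos : 0 < Ω K0)
    (L : ℕ) : ∃ b : ℕ, b < 2 ^ L ∧ (∃ k, K0 ≤ k ∧ (b : ℝ) < Ω k * 2 ^ L) ∧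
      ∀ k', Ω k' * 2 ^ L ≤ (b : ℝ) + 1 := by
  classical
  have hex : ∃ c : ℕ, ∀ k', Ω k' * 2 ^ L ≤ (c : ℝ) := ⟨2 ^ L, by
    intro k'
    push_cast
    have : (0 : ℝ) < 2 ^ L := by positivity
    nlinarith [hle k']⟩
  have hspec := Nat.find_spec hex
  have hmin : ∀ {m : ℕ}, m < Nat.find hex → _ := fun {m} h => Nat.find_min hex h
  have hle2 : Nat.find hex ≤ 2 ^ L := by
    apply Nat.find_min'
    intro k'
    push_cast
    have : (0 : ℝ) < 2 ^ L := by positivity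
    nlinarith [hle k']
  obtain ⟨c, hc⟩ : ∃ c, c = Nat.find hex := ⟨_, rfl⟩
  rw [← hc] at hspec hle2 hmin
  have hc0 : c ≠ 0 := by
    intro h
    have h1 := hspec K0
    rw [h] at h1
    have : 0 < Ω K0 * 2 ^ L := by positivity
    simp at h1
    linarith
  obtain ⟨b, rfl⟩ := Nat.exists_eq_succ_of_ne_zero hc0
  refine ⟨b, by omega, ?_, ?_⟩
  · have h1 := hmin (m := b) (by omega)
    push Not at h1
    obtain ⟨k, hk⟩ := h1
    refine ⟨max k K0, le_max_right _ _, lt_of_lt_of_le hk ?_⟩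
    exact mul_le_mul_of_nonneg_right (hm (le_max_left _ _)) (by positivity)
  · intro k'
    have := hspec k'
    push_cast at this
    exact this

theorem est (U : Computer) (G : ℕ → Finset (List Bool)) (hmono : Monotone G)
    (hdom : ∀ k, ∀ p ∈ G k, p ∈ U.domain) (hcov : ∀ p ∈ U.domain, ∃ k, p ∈ G k)
    (T : ℝ) (hT0 : 0 < T) (x0 : ℝ) (hx0 : x0 = (2 : ℝ) ^ (-1 / T)) (hx1 : 2 * x0 ≤ 1)
    (p0 : List Bool) (K0 : ℕ) (hp0 : p0 ∈ G K0) (hl0 : 0 < p0.length)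
    (L k A B x y : ℕ) (ω zq : ℝ)
    (h1 : ∀ k', ∑ p ∈ G k', ((1 : ℝ) / 2) ^ p.length ≤ ω + (1 / 2) ^ L)
    (h2 : ω ≤ ∑ p ∈ G k, ((1 : ℝ) / 2) ^ p.length)
    (hK : K0 ≤ k) (hA : 0 < A) (hB : 0 < B) (hy : 0 < y) (hAB : A ≤ B)
    (hTt : T ≤ (A : ℝ) / B) (hpc : y ^ A ≤ x ^ A * 2 ^ B)
    (hs : ∑ p ∈ G k, ((x : ℝ) / y) ^ p.length < zq)
    (hz : zq ≤ ∑' p : U.domain, x0 ^ (p : List Bool).length) :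
    ((A : ℝ) / B - T) * (Real.log 2 * x0 ^ p0.length) ≤ x0 ^ L := by
  have hx0p : 0 < x0 := by rw [hx0]; positivity
  have hB' : (0 : ℝ) < B := by exact_mod_cast hB
  have ht1 : (A : ℝ) / B ≤ 1 := by
    rw [div_le_one hB']; exact_mod_cast hAB
  have htb := t_bound T _ hT0 hTt ht1
  rw [← hx0] at htb
  have hpc' := (pow_cond A B x y hA hB hy).1 hpc
  set ξ : ℝ := (x : ℝ) / y with hξ
  have hl : 0 < Real.log 2 := Real.log_pos (by norm_num)
  have e1 : ((A : ℝ) / B - T) * (Real.log 2 * x0) ≤ ξ - x0 := by linarith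
  have e0 : x0 ≤ ξ := by
    have : 0 ≤ ((A : ℝ) / B - T) * (Real.log 2 * x0) :=
      mul_nonneg (by linarith) (by positivity)
    linarith
  have htail := tail_bound U G hmono hdom hcov L k ω x0 hx0p hx1 h1 h2
  have e2 : ξ ^ p0.length - x0 ^ p0.length ≤ ∑ p ∈ G k, (ξ ^ p.length - x0 ^ p.length) :=
    Finset.single_le_sum (f := fun p : List Bool => ξ ^ p.length - x0 ^ p.length)
      (fun p _ => sub_nonneg.2 (pow_le_pow_left₀ hx0p.le e0 _)) (hmono hK hp0)
  rw [Finset.sum_sub_distrib] at e2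
  obtain ⟨m, hm⟩ := Nat.exists_eq_succ_of_ne_zero hl0.ne'
  have e3 : (ξ - x0) * x0 ^ m ≤ ξ ^ p0.length - x0 ^ p0.length := by
    rw [hm, Nat.succ_eq_add_one, pow_succ, pow_succ]
    have := pow_le_pow_left₀ hx0p.le e0 m
    nlinarith
  have e4 := mul_le_mul_of_nonneg_right e1 (pow_nonneg hx0p.le m)
  have e5 : ((A : ℝ) / B - T) * (Real.log 2 * x0) * x0 ^ m =
      ((A : ℝ) / B - T) * (Real.log 2 * x0 ^ p0.length) := by
    rw [hm, Nat.succ_eq_add_one, pow_succ]; ring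
  linarith

theorem floor_est (T t Kc : ℝ) (n : ℕ) (hT0 : 0 < T) (hTt : T ≤ t) (h : (t - T) * 2 ^ n ≤ Kc) :
    ⌊T * 2 ^ n⌋₊ ≤ ⌊t * 2 ^ n⌋₊ ∧ ⌊t * 2 ^ n⌋₊ - ⌊T * 2 ^ n⌋₊ ≤ ⌈Kc⌉₊ + 1 := by
  have h0 : (0 : ℝ) < 2 ^ n := by positivity
  refine ⟨Nat.floor_le_floor (mul_le_mul_of_nonneg_right hTt h0.le), ?_⟩
  have h1 := Nat.floor_le (a := t * 2 ^ n) (mul_nonneg (by linarith) h0.le)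
  have h2 := Nat.lt_floor_add_one (T * 2 ^ n)
  have h3 := Nat.le_ceil Kc
  have h4 : (⌊t * 2 ^ n⌋₊ : ℝ) ≤ ⌊T * 2 ^ n⌋₊ + 1 + ⌈Kc⌉₊ := by linarith
  have h5 : ⌊t * 2 ^ n⌋₊ ≤ ⌊T * 2 ^ n⌋₊ + 1 + ⌈Kc⌉₊ := by exact_mod_cast h4
  omega

theorem floor_div (A B n : ℕ) : 2 ^ n * A / B = ⌊((A : ℝ) / B) * 2 ^ n⌋₊ := by
  rw [← Nat.floor_div_eq_div (K := ℝ)]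
  congr 1
  push_cast
  ring

theorem core (U : Computer) (hU : IsOptimal U) (T : ℝ) (hT0 : 0 < T) (hT1 : T < 1)
    (x0 : ℝ) (hx0 : x0 = (2 : ℝ) ^ (-1 / T)) (ta tb zu zv : ℕ → ℕ)
    (hta : Computable ta) (htb : Computable tb) (hzu : Computable zu) (hzv : Computable zv)
    (htb0 : ∀ i, 0 < tb i) (hzv0 : ∀ i, 0 < zv i)
    (htT : ∀ i, T ≤ (ta i : ℝ) / tb i)
    (hti : ∀ c, T < c → ∃ i, (ta i : ℝ) / tb i < c)
    (hzZ : ∀ m, (zu m : ℝ) / zv m ≤ ∑' p : U.domain, x0 ^ (p : List Bool).length)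
    (hzi : ∀ c, c < ∑' p : U.domain, x0 ^ (p : List Bool).length → ∃ m, c < (zu m : ℝ) / zv m)
    (M a : ℕ) (hM : 0 < M) (hMa : T * M ≤ a) :
    ∃ d : ℕ, ∀ n, H U (bits T n) ≤ (n / M) * (a + 1) + 1 + d := by
  classical
  have hinf := domain_infinite U hU
  have hx0p : 0 < x0 := by rw [hx0]; positivity
  have hx1 : 2 * x0 ≤ 1 := by
    have : x0 ≤ (2 : ℝ) ^ (-1 : ℝ) := by
      rw [hx0]
      apply Real.rpow_le_rpow_of_exponent_le (by norm_num)
      rw [div_le_iff₀ hT0]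
      linarith
    rw [Real.rpow_neg_one] at this
    linarith
  have hxT : x0 ^ a ≤ (1 / 2) ^ M := by
    rw [hx0, ← Real.rpow_natCast, ← Real.rpow_mul (by norm_num), one_div, inv_pow,
      ← Real.rpow_natCast, ← Real.rpow_neg (by norm_num)]
    apply Real.rpow_le_rpow_of_exponent_le (by norm_num)
    rw [div_mul_eq_mul_div, div_le_iff₀ hT0]
    linarith
  obtain ⟨P, G, hP, hmono, hdom, hcov, hPG⟩ := stage_exists U
  obtain ⟨p0, hp0⟩ := hinf.nonempty
  obtain ⟨K0, hK0⟩ := hcov p0 hp0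
  have hl0 : 0 < p0.length := by
    rw [List.length_pos_iff]
    rintro rfl
    exact nil_notMem U hinf hp0
  obtain ⟨I, hI, hC⟩ := machine P hP K0 a ta tb zu zv hta htb hzu hzv
  choose C hC using hC
  choose d hd using fun r e => hU (C M r e)
  have hlog : 0 < Real.log 2 := Real.log_pos (by norm_num)
  set c0 : ℝ := Real.log 2 * x0 ^ p0.length with hc0
  have hc0p : 0 < c0 := by positivity
  set E : ℕ := ⌈2 ^ M / c0⌉₊ + 1 with hE
  refine ⟨∑ r ∈ Finset.range M, ∑ e ∈ Finset.range (E + 1), d r e, ?_⟩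
  intro n
  set j := n / M with hj
  set r := n % M with hr
  have hn : M * j + r = n := Nat.div_add_mod n M
  have hrM : r < M := Nat.mod_lt _ hM
  set Ω : ℕ → ℝ := fun k => ∑ p ∈ G k, ((1 : ℝ) / 2) ^ p.length with hΩ
  have hΩm : Monotone Ω := fun k l hkl =>
    Finset.sum_le_sum_of_subset_of_nonneg (hmono hkl) (fun _ _ _ => by positivity)
  have hPΩ : ∀ k, (P k 1 2 : ℝ) = 2 ^ k * Ω k := by
    intro k
    have := hPG k 1 2 (by norm_num)
    simpa [hΩ] using this
  have hlt_iff : ∀ b k : ℕ, b * 2 ^ k < P k 1 2 * 2 ^ (a * j) ↔ (b : ℝ) < Ω k * 2 ^ (a * j) := by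
    intro b k
    rw [← Nat.cast_lt (α := ℝ)]
    push_cast
    rw [hPΩ k, mul_comm (b : ℝ), mul_assoc]
    exact mul_lt_mul_iff_right₀ (by positivity)
  have hΩ0 : 0 < Ω K0 := Finset.sum_pos (fun _ _ => by positivity) ⟨p0, hK0⟩
  obtain ⟨b, hbL, ⟨k, hkK, hbk⟩, hb1⟩ := block_choice Ω hΩm
    (fun k => kraft_dom U hinf (G k) (hdom k)) K0 hΩ0 (a * j)
  obtain ⟨l, hlL, hlb⟩ := block_exists (a * j) b hbL
  set p : List Bool := List.replicate j true ++ false :: l with hp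
  have hidx : p.idxOf false = j := idx_prog l j
  have hval : valL p / 2 ^ (j + 1) = b := by rw [← hlb]; exact valL_prog l j
  have hlen : p.length = j + 1 + a * j := by
    simp [hp, hlL]; ring
  have hta0 : ∀ i, 0 < ta i := by
    intro i
    rcases Nat.eq_zero_or_pos (ta i) with h | h
    · have := htT i
      rw [h] at this
      simp at this
      linarith
    · exact h
  have hcmp : ∀ k x y m, 0 < y → (P k x y * zv m < zu m * y ^ k ↔
      ∑ p ∈ G k, ((x : ℝ) / y) ^ p.length < (zu m : ℝ) / zv m) := by
    intro k x y m hy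
    have hy' : (0 : ℝ) < y := by exact_mod_cast hy
    have hv' : (0 : ℝ) < zv m := by exact_mod_cast hzv0 m
    rw [← Nat.cast_lt (α := ℝ)]
    push_cast
    rw [hPG k x y hy, lt_div_iff₀ hv', mul_comm (zu m : ℝ), mul_assoc]
    exact mul_lt_mul_iff_right₀ (by positivity)
  have hsolv : ∃ k i x y m, QQ P K0 a p k x y (ta i) (tb i) (zu m) (zv m) := by
    have hlt := sum_lt_Z U hinf (G k) (hdom k) x0 hx0p hx1
    rw [hx0] at hlt hzi
    obtain ⟨i, x, y, m, hy, hAB, hpw, hsum⟩ := search_exists (G k) T _ hT0 hT1 hlt ta tb zu zv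
      htb0 htT hti hzi
    refine ⟨k, i, x, y, m, ?_⟩
    unfold QQ
    rw [hidx, hval]
    exact ⟨hlen.symm, hkK, hy, (hlt_iff b k).2 hbk, hAB, hpw, (hcmp k x y m hy).2 hsum⟩
  obtain ⟨k1, x, y, m, hq⟩ := hI p hsolv
  unfold QQ at hq
  rw [hidx, hval] at hq
  obtain ⟨-, hq2, hq3, hq4, hq5, hq6, hq7⟩ := hq
  set A := ta (I p) with hA
  set B := tb (I p) with hB
  have h2p : (0 : ℝ) < 2 ^ (a * j) := by positivity
  have hest := est U G hmono hdom hcov T hT0 x0 hx0 hx1 p0 K0 hK0 hl0 (a * j) k1 A B x y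
    ((b : ℝ) / 2 ^ (a * j)) ((zu m : ℝ) / zv m)
    (by
      intro k'
      have := hb1 k'
      have h12 : ((1 : ℝ) / 2) ^ (a * j) = 1 / 2 ^ (a * j) := by rw [div_pow, one_pow]
      rw [h12, ← add_div, le_div_iff₀ h2p]
      exact this)
    (by
      rw [div_le_iff₀ h2p]
      exact ((hlt_iff b k1).1 hq4).le)
    hq2 (hta0 _) (htb0 _) hq3 hq5 (htT _) hq6 ((hcmp _ _ _ _ hq3).1 hq7) (hzZ m)
  have hfin : ((A : ℝ) / B - T) * 2 ^ n ≤ 2 ^ M / c0 := by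
    have h1 : x0 ^ (a * j) ≤ (1 / 2) ^ (M * j) := by
      rw [pow_mul, pow_mul]
      exact pow_le_pow_left₀ (by positivity) hxT j
    have h2 : ((A : ℝ) / B - T) * c0 ≤ (1 / 2) ^ (M * j) := hest.trans h1
    have h3 : (2 : ℝ) ^ n = 2 ^ (M * j) * 2 ^ r := by rw [← pow_add, hn]
    have h4 : (2 : ℝ) ^ r ≤ 2 ^ M := pow_le_pow_right₀ (by norm_num) hrM.le
    have h5 : ((1 : ℝ) / 2) ^ (M * j) * 2 ^ (M * j) = 1 := by
      rw [← mul_pow]; norm_num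
    rw [le_div_iff₀ hc0p]
    calc ((A : ℝ) / B - T) * 2 ^ n * c0 = (((A : ℝ) / B - T) * c0) * 2 ^ n := by ring
      _ ≤ (1 / 2) ^ (M * j) * 2 ^ n := mul_le_mul_of_nonneg_right h2 (by positivity)
      _ = 2 ^ r := by rw [h3, ← mul_assoc, h5, one_mul]
      _ ≤ 2 ^ M := h4
  obtain ⟨hf1, hf2⟩ := floor_est T _ _ n hT0 (htT (I p)) hfin
  set e := ⌊(A : ℝ) / B * 2 ^ n⌋₊ - ⌊T * 2 ^ n⌋₊ with he
  have hout := hC M r e p hsolv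
  have hOO : OO M r e p A B = bits T n := by
    rw [bits_eq T hT0 hT1]
    unfold OO
    rw [hidx, hn, floor_div]
    have : ⌊(A : ℝ) / B * 2 ^ n⌋₊ - e = ⌊T * 2 ^ n⌋₊ := Nat.sub_sub_self hf1
    rw [this]
  rw [hOO] at hout
  obtain ⟨p', hp1, hp2⟩ := hd r e p (Part.dom_iff_mem.2 ⟨_, hout⟩)
  have hH : H U (bits T n) ≤ p'.length := Nat.sInf_le ⟨p', rfl, hp2 _ hout⟩
  have hde : d r e ≤ ∑ r ∈ Finset.range M, ∑ e ∈ Finset.range (E + 1), d r e := by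
    refine le_trans ?_ (Finset.single_le_sum (f := fun r => ∑ e ∈ Finset.range (E + 1), d r e)
      (fun _ _ => Nat.zero_le _) (Finset.mem_range.2 hrM))
    exact Finset.single_le_sum (f := fun e => d r e)
      (fun _ _ => Nat.zero_le _) (Finset.mem_range.2 (by omega))
  have : j * (a + 1) + 1 = j + 1 + a * j := by ring
  rw [this]
  omega

/-- **Theorem (paper Thm 19).** For `T ∈ (0,1)`, if `Z(T)` is left-computable
and `T` is right-computable, then `T` is `T`-compressible:
`limsup_{n→∞} H(T_n)/n ≤ T`. -/
theorem leftComputable_Z_imp_T_compressible (U : Computer)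
    (hU : IsOptimal U) (T : ℝ) (hT0 : 0 < T) (hT1 : T < 1)
    (hZ : LeftComputable (∑' p, zterm U T p))
    (hT : RightComputable T) :
    Filter.limsup (fun n : ℕ => (H U (bits T n) : ℝ) / n) atTop ≤ T := by
  obtain ⟨x0, hx0⟩ : ∃ x0, x0 = (2 : ℝ) ^ (-1 / T) := ⟨_, rfl⟩
  have hzt : ∀ p : U.domain, zterm U T p = x0 ^ (p : List Bool).length := by
    intro p
    unfold zterm
    rw [hx0, ← Real.rpow_natCast, ← Real.rpow_mul (by norm_num)]
    congr 1
    ring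
  simp only [hzt] at hZ
  obtain ⟨Z, hZd⟩ : ∃ Z, Z = ∑' p : U.domain, x0 ^ (p : List Bool).length := ⟨_, rfl⟩
  rw [← hZd] at hZ
  have hx0p : 0 < x0 := by rw [hx0]; positivity
  have hZ0 : 0 ≤ Z := by rw [hZd]; exact tsum_nonneg fun _ => by positivity
  obtain ⟨g, hg, hg1, hg2⟩ := hT
  obtain ⟨h, hh, hh1, hh2⟩ := hZ
  have hge : ∀ i, (((g i).num.toNat : ℕ) : ℝ) / (g i).den = g i := by
    intro i
    have h0 : (0 : ℝ) < g i := lt_of_lt_of_le hT0 (hg1 i)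
    have h0' : 0 < g i := by exact_mod_cast h0
    have h3 : (((g i).num.toNat : ℕ) : ℤ) = (g i).num := Int.toNat_of_nonneg (Rat.num_pos.2 h0').le
    have h4 : (((g i).num.toNat : ℕ) : ℝ) = (((g i).num : ℤ) : ℝ) := by exact_mod_cast h3
    rw [h4]
    exact (Rat.cast_def _).symm
  have hhe : ∀ i, (((-(h i).num).toNat : ℕ) : ℝ) / (h i).den = max (-(h i : ℝ)) 0 := by
    intro i
    have hd : (0 : ℝ) < (h i).den := by exact_mod_cast (h i).den_pos
    have h3 : (((-(h i).num).toNat : ℕ) : ℤ) = max (-(h i).num) 0 := Int.toNat_eq_max _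
    have h4 : (((-(h i).num).toNat : ℕ) : ℝ) = max (-(((h i).num : ℤ) : ℝ)) 0 := by exact_mod_cast h3
    rw [h4, Rat.cast_def (h i), ← neg_div]
    conv_rhs => rw [← zero_div ((h i).den : ℝ)]
    exact (max_div_div_right hd.le _ _).symm
  have hcore := core U hU T hT0 hT1 x0 hx0 (fun i => (g i).num.toNat) (fun i => (g i).den)
    (fun i => (-(h i).num).toNat) (fun i => (h i).den)
    (rat_num_toNat_computable.comp hg) (rat_den_computable.comp hg)
    (rat_neg_num_toNat_computable.comp hh) (rat_den_computable.comp hh)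
    (fun i => (g i).den_pos) (fun i => (h i).den_pos)
    (fun i => by rw [hge]; exact hg1 i)
    (fun c hc => by
      obtain ⟨i, hi⟩ := (hg2.eventually_lt_const hc).exists
      exact ⟨i, by rw [hge]; exact hi⟩)
    (fun m => by
      rw [hhe, ← hZd]
      exact max_le (by linarith [hh1 m]) hZ0)
    (fun c hc => by
      rw [← hZd] at hc
      obtain ⟨i, hi⟩ := (hh2.eventually_lt_const (neg_lt_neg hc)).exists
      refine ⟨i, ?_⟩
      rw [hhe]
      exact lt_of_lt_of_le (by linarith) (le_max_left _ _))
  apply le_of_forall_pos_le_add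
  intro ε hε
  obtain ⟨M, hM⟩ := exists_nat_gt (4 / ε)
  have hM0 : (0 : ℝ) < M := lt_trans (by positivity) hM
  have hMn : 0 < M := by exact_mod_cast hM0
  obtain ⟨d, hd⟩ := hcore M ⌈T * M⌉₊ hMn (Nat.le_ceil _)
  have ha : ((⌈T * M⌉₊ : ℕ) : ℝ) < T * M + 1 := Nat.ceil_lt_add_one (by positivity)
  obtain ⟨N, hN⟩ := exists_nat_gt ((1 + d : ℝ) * 2 / ε)
  refine Filter.limsup_le_of_le ?_ ?_
  · exact (Filter.isBoundedUnder_of ⟨0, fun n => by positivity⟩).isCoboundedUnder_le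
  · filter_upwards [Filter.eventually_ge_atTop (N + 1)] with n hn
    have hn0 : (0 : ℝ) < n := by exact_mod_cast (by omega : 0 < n)
    have hnN : (N : ℝ) ≤ n := by exact_mod_cast (by omega : N ≤ n)
    rw [div_le_iff₀ hn0]
    have h1 : (H U (bits T n) : ℝ) ≤ ((n / M : ℕ) : ℝ) * ((⌈T * M⌉₊ : ℕ) + 1) + 1 + d := by
      exact_mod_cast hd n
    have h2 : ((n / M : ℕ) : ℝ) ≤ n / M := Nat.cast_div_le
    have h3 : ((n / M : ℕ) : ℝ) * ((⌈T * M⌉₊ : ℕ) + 1) ≤ n / M * (T * M + 2) :=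
      mul_le_mul h2 (by linarith) (by positivity) (by positivity)
    have h4 : (n : ℝ) / M * (T * M + 2) = n * T + n * (2 / M) := by field_simp
    have h5 : (2 : ℝ) / M ≤ ε / 2 := by
      rw [div_lt_iff₀ hε] at hM
      rw [div_le_div_iff₀ hM0 (by norm_num)]
      linarith
    have h6 : (1 + d : ℝ) ≤ n * (ε / 2) := by
      rw [div_lt_iff₀ hε] at hN
      nlinarith
    nlinarith
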